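/- For every ε > 0 there exists C_ε > 0 such that, uniformly in dyadic N, N₁, N₂, N₃ ≥ 1 and m ∈ ℤ, the operator norm of the base tensor h^{𝐍,(m)} viewed as a linear map from ℓ²((ℤ²)²) (variables (n₁, n₃)) to ℓ²((ℤ²)²) (variables (n, n₂)), i.e. the map sending f to (n, n₂) ↦ ∑_{n₁,n₃} h^{𝐍,(m)}(n, n₁, n₂, n₃) f(n₁, n₃), is at most C_ε · (min(N, N₂))^ε · (min(N₁, N₃))^ε. -/

import Mathlib

/-- Euclidean norm of a lattice point in `ℤ²`. -/
noncomputable def znorm (n : ℤ × ℤ) : ℝ := Real.sqrt ((n.1 : ℝ) ^ 2 + (n.2 : ℝ) ^ 2)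

/-- Squared Euclidean norm `|n|²` of `n ∈ ℤ²`, as an integer. -/
def nsq (n : ℤ × ℤ) : ℤ := n.1 ^ 2 + n.2 ^ 2

/-- `φ(n̄) = |n|² − |n₁|² + |n₂|² − |n₃|²`. -/
def phiFn (n n₁ n₂ n₃ : ℤ × ℤ) : ℤ := nsq n - nsq n₁ + nsq n₂ - nsq n₃

/-- `N` is a dyadic number: `N = 2^k` for some integer `k ≥ 0`. -/
def IsDyadic (N : ℝ) : Prop := ∃ k : ℕ, N = 2 ^ k

/-- `|n| ∼ N`: for dyadic `N ≥ 2` this means `N/2 < |n| ≤ N`; for `N = 1` it means `|n| ≤ 1`. -/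
def simDyadic (N : ℝ) (n : ℤ × ℤ) : Prop :=
  (N = 1 ∧ znorm n ≤ 1) ∨ (N ≠ 1 ∧ N / 2 < znorm n ∧ znorm n ≤ N)

/-- Membership in the set `S^{𝐍,(m)}`. -/
def SMem (N N₁ N₂ N₃ : ℝ) (m : ℤ) (n n₁ n₂ n₃ : ℤ × ℤ) : Prop :=
  n = n₁ - n₂ + n₃ ∧ n ≠ n₁ ∧ n ≠ n₃ ∧ phiFn n n₁ n₂ n₃ = m ∧
    simDyadic N n ∧ simDyadic N₁ n₁ ∧ simDyadic N₂ n₂ ∧ simDyadic N₃ n₃ 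

-- The base tensor `h^{𝐍,(m)}`: the `{0,1}`-valued indicator of `S^{𝐍,(m)}`.
open Classical in
noncomputable def hten (N N₁ N₂ N₃ : ℝ) (m : ℤ) (n n₁ n₂ n₃ : ℤ × ℤ) : ℝ :=
  if SMem N N₁ N₂ N₃ m n n₁ n₂ n₃ then 1 else 0

/-!
`h^{𝐍,(m)}` is its own transpose up to exchanging `(n, n₂)` with `(n₁, n₃)` and `m` with `-m`, so
by Schur's test it suffices to bound the row sums. A row counts the pairs `(n₁, n₃)` with `n₁ + n₃`
and `|n₁|² + |n₃|²` prescribed; by the parallelogram law the differences `n₁ - n₃` then lie on a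
fixed circle `|x|² = r` in `ℤ²`, and they are `4 min(N₁, N₃)`-close to each other. Three distinct
lattice points on such a circle span a triangle of area at least `1/2`, so by the circumradius
formula `r ≪ min(N₁, N₃)⁶`; and a circle of radius `√r` carries `O(r^ε)` lattice points by the
divisor bound in `ℤ[i]`.
-/

open Finset UniqueFactorizationMonoid

/-! ### The divisor bound -/

lemma natCast_add_one_le_mul_pow_rpow {w ε : ℝ} (hw : 2 ≤ w) (hε : 0 < ε) (k : ℕ) :
    (k + 1 : ℝ) ≤ (1 + 1 / (ε * Real.log 2)) * (w ^ k) ^ ε := by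
  have bernoulli : k * (ε * Real.log 2) + 1 ≤ ((2 : ℝ) ^ k) ^ ε := by
    rw [Real.rpow_def_of_pos (by positivity), Real.log_pow, mul_assoc, mul_comm (Real.log 2)]
    exact Real.add_one_le_exp _
  calc (k + 1 : ℝ)
      ≤ k + 1 + (k * (ε * Real.log 2) + 1 / (ε * Real.log 2)) :=
        le_add_of_nonneg_right (by positivity)
    _ = (1 + 1 / (ε * Real.log 2)) * (k * (ε * Real.log 2) + 1) := by field_simp; ring
    _ ≤ (1 + 1 / (ε * Real.log 2)) * ((2 : ℝ) ^ k) ^ ε := by gcongr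
    _ ≤ (1 + 1 / (ε * Real.log 2)) * (w ^ k) ^ ε := by gcongr

lemma natCast_add_one_le_pow_rpow {w ε : ℝ} (hw : 0 ≤ w) (h : 2 ≤ w ^ ε) (k : ℕ) :
    (k + 1 : ℝ) ≤ (w ^ k) ^ ε :=
  calc (k + 1 : ℝ) ≤ 2 ^ k := mod_cast Nat.lt_two_pow_self
    _ ≤ (w ^ ε) ^ k := by gcongr
    _ = (w ^ k) ^ ε := Real.rpow_pow_comm hw ε k

lemma exists_card_Iic_le_mul_prod_rpow {α : Type*} [DecidableEq α] (w : α → ℕ) [Northcott w]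
    {ε : ℝ} (hε : 0 < ε) :
    ∃ C : ℝ, 0 < C ∧ ∀ s : Multiset α, (∀ a ∈ s, 2 ≤ w a) →
      (#(Iic s) : ℝ) ≤ C * ((s.map w).prod : ℝ) ^ ε := by
  have large : ∀ᶠ a in Filter.cofinite, 2 ≤ (w a : ℝ) ^ ε :=
    (((tendsto_rpow_atTop hε).comp tendsto_natCast_atTop_atTop).comp
      ((northcott_iff_tendsto w).1 inferInstance)).eventually_ge_atTop 2
  obtain ⟨F, hF⟩ : ∃ F : Finset α, ∀ a ∉ F, 2 ≤ (w a : ℝ) ^ ε :=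
    ⟨(Filter.eventually_cofinite.1 large).toFinset, by simp⟩
  set c : ℝ := 1 + 1 / (ε * Real.log 2)
  have hc : 1 ≤ c := le_add_of_nonneg_right (by positivity)
  refine ⟨c ^ #F, by positivity, fun s hs => ?_⟩
  have factor_le : ∀ a ∈ s.toFinset,
      (s.count a + 1 : ℝ) ≤ (if a ∈ F then c else 1) * ((w a : ℝ) ^ s.count a) ^ ε := by
    intro a ha
    split_ifs with haF
    · exact natCast_add_one_le_mul_pow_rpow (mod_cast hs a (Multiset.mem_toFinset.1 ha)) hε _
    · rw [one_mul]
      exact natCast_add_one_le_pow_rpow (Nat.cast_nonneg _) (hF a haF) _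
  calc (#(Iic s) : ℝ) = ∏ a ∈ s.toFinset, (s.count a + 1 : ℝ) := by
        rw [Multiset.card_Iic]; push_cast; rfl
    _ ≤ ∏ a ∈ s.toFinset, (if a ∈ F then c else 1) * ((w a : ℝ) ^ s.count a) ^ ε :=
        prod_le_prod (fun _ _ => by positivity) factor_le
    _ = c ^ #(s.toFinset ∩ F) * ((s.map w).prod : ℝ) ^ ε := by
        rw [prod_mul_distrib, prod_ite_mem, prod_const, prod_multiset_map_count, Nat.cast_prod,
          ← Real.finsetProd_rpow _ _ (fun _ _ => Nat.cast_nonneg _)]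
        push_cast; rfl
    _ ≤ c ^ #F * ((s.map w).prod : ℝ) ^ ε := by
        gcongr
        exact inter_subset_right

lemma finite_units_of_northcott {M : Type*} [Monoid M] (w : M →* ℕ) [Northcott w] :
    Finite Mˣ := by
  have map_unit (u : Mˣ) : w u = 1 := Nat.isUnit_iff.1 (u.isUnit.map w)
  have := (Northcott.finite_le (h := w) 1).to_subtype
  exact Finite.of_injective (fun u : Mˣ => (⟨u, (map_unit u).le⟩ : {a | w a ≤ 1}))
    fun u v h => Units.ext (congrArg Subtype.val h)

lemma two_le_map_of_prime {M : Type*} [CommMonoidWithZero M] [IsCancelMulZero M] (w : M →* ℕ)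
    [Northcott w] {p : M} (hp : Prime p) : 2 ≤ w p := by
  by_contra! h
  -- Otherwise the infinitely many distinct powers of `p` all have weight at most `1`.
  refine Set.infinite_range_of_injective (pow_injective_of_not_isUnit hp.not_isUnit hp.ne_zero)
    ((Northcott.finite_le (h := w) 1).subset ?_)
  rintro _ ⟨k, rfl⟩
  simpa only [Set.mem_ofPred_eq, map_pow] using pow_le_one₀ (Nat.zero_le _) (Nat.le_of_lt_succ h)

section UniqueFactorizationMonoid

variable {M : Type*} [CommMonoidWithZero M] [UniqueFactorizationMonoid M]

lemma card_le_card_units_mul_card_Iic_normalizedFactors [NormalizationMonoid M] [DecidableEq M]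
    [Finite Mˣ] {x : M} (hx : x ≠ 0) {S : Finset M} (hS : ∀ z ∈ S, z ∣ x) :
    #S ≤ Nat.card Mˣ * #(Iic (normalizedFactors x)) := by
  have := Fintype.ofFinite Mˣ
  have ne_zero : ∀ z ∈ S, z ≠ 0 := fun z hz => ne_zero_of_dvd_ne_zero hx (hS z hz)
  refine card_le_mul_card_image_of_maps_to (f := normalizedFactors) (fun z hz => mem_Iic.2 <|
    (dvd_iff_normalizedFactors_le_normalizedFactors (ne_zero z hz) hx).1 (hS z hz)) _ fun b _ => ?_
  obtain h | ⟨z₀, hz₀⟩ := (S.filter (normalizedFactors · = b)).eq_empty_or_nonempty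
  · simp [h]
  · obtain ⟨hz₀S, rfl⟩ := mem_filter.1 hz₀
    have subset_orbit : S.filter (normalizedFactors · = normalizedFactors z₀) ⊆
        univ.image fun u : Mˣ => z₀ * u := by
      intro z hz
      obtain ⟨hzS, hz⟩ := mem_filter.1 hz
      obtain ⟨u, hu⟩ := (associated_iff_normalizedFactors_eq_normalizedFactors
        (ne_zero z₀ hz₀S) (ne_zero z hzS)).2 hz.symm
      exact mem_image.2 ⟨u, mem_univ u, hu⟩
    calc _ ≤ #(univ.image fun u : Mˣ => z₀ * u) := card_le_card subset_orbit
      _ ≤ Nat.card Mˣ := by rw [Nat.card_eq_fintype_card]; exact card_image_le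

theorem exists_card_dvd_le_mul_rpow (w : M →* ℕ) [Northcott w] {ε : ℝ} (hε : 0 < ε) :
    ∃ C : ℝ, 0 < C ∧ ∀ x : M, x ≠ 0 → ∀ S : Finset M, (∀ z ∈ S, z ∣ x) →
      (#S : ℝ) ≤ C * (w x : ℝ) ^ ε := by
  classical
  let _ : StrongNormalizationMonoid M := UniqueFactorizationMonoid.strongNormalizationMonoid
  have := finite_units_of_northcott w
  obtain ⟨C, hC, card_Iic_le⟩ := exists_card_Iic_le_mul_prod_rpow w hε
  refine ⟨Nat.card Mˣ * C, mul_pos (mod_cast Nat.card_pos) hC, fun x hx S hS => ?_⟩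
  have prod_eq : ((normalizedFactors x).map w).prod = w x := by
    rw [Multiset.prod_hom]
    exact associated_iff_eq.1 ((prod_normalizedFactors hx).map w)
  calc (#S : ℝ) ≤ Nat.card Mˣ * #(Iic (normalizedFactors x)) :=
        mod_cast card_le_card_units_mul_card_Iic_normalizedFactors hx hS
    _ ≤ Nat.card Mˣ * (C * (w x : ℝ) ^ ε) := by
        rw [← prod_eq]
        gcongr
        exact card_Iic_le _ fun p hp => two_le_map_of_prime w (prime_of_normalized_factor p hp)
    _ = Nat.card Mˣ * C * (w x : ℝ) ^ ε := (mul_assoc _ _ _).symm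

end UniqueFactorizationMonoid

/-! ### Lattice points on circles -/

/-- The norm of the Gaussian integers as a multiplicative map into `ℕ`, the form in which the
divisor bound `exists_card_dvd_le_mul_rpow` takes it. -/
def gaussianNorm : GaussianInt →* ℕ := (Int.natAbsHom : ℤ →* ℕ).comp Zsqrtd.normMonoidHom

lemma gaussianNorm_apply (z : GaussianInt) : gaussianNorm z = z.norm.natAbs := rfl

instance : Northcott gaussianNorm where
  finite_le B := by
    have box : (Set.Icc (-B : ℤ) B ×ˢ Set.Icc (-B : ℤ) B).Finite :=
      (Set.finite_Icc _ _).prod (Set.finite_Icc _ _)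
    refine (box.image fun a => (⟨a.1, a.2⟩ : GaussianInt)).subset fun z hz => ?_
    rw [Set.mem_ofPred_eq, gaussianNorm_apply, GaussianInt.natAbs_norm_eq] at hz
    have hre := Nat.le_mul_self z.re.natAbs
    have him := Nat.le_mul_self z.im.natAbs
    exact ⟨(z.re, z.im), ⟨⟨by lia, by lia⟩, ⟨by lia, by lia⟩⟩, rfl⟩

theorem exists_card_nsq_eq_le {ε : ℝ} (hε : 0 < ε) :
    ∃ C : ℝ, 0 < C ∧ ∀ r : ℤ, 0 < r → ∀ S : Finset (ℤ × ℤ), (∀ a ∈ S, nsq a = r) →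
      (#S : ℝ) ≤ C * (r : ℝ) ^ ε := by
  obtain ⟨C, hC, card_le⟩ := exists_card_dvd_le_mul_rpow gaussianNorm (half_pos hε)
  refine ⟨C, hC, fun r hr S hS => ?_⟩
  let toGaussian : ℤ × ℤ ↪ GaussianInt :=
    ⟨fun a => ⟨a.1, a.2⟩, fun a b h => Prod.ext (congrArg Zsqrtd.re h) (congrArg Zsqrtd.im h)⟩
  have norm_toGaussian (a : ℤ × ℤ) : (toGaussian a).norm = nsq a := by
    change a.1 * a.1 - -1 * a.2 * a.2 = a.1 ^ 2 + a.2 ^ 2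
    ring
  have dvd : ∀ z ∈ S.map toGaussian, z ∣ (r : GaussianInt) := by
    simp only [mem_map, forall_exists_index, and_imp, forall_apply_eq_imp_iff₂]
    intro a ha
    rw [← hS a ha, ← norm_toGaussian, Zsqrtd.norm_eq_mul_conj]
    exact dvd_mul_right _ _
  have norm_r : (gaussianNorm r : ℝ) = (r : ℝ) ^ (2 : ℝ) := by
    rw [gaussianNorm_apply, GaussianInt.natCast_natAbs_norm, Zsqrtd.norm_intCast, Real.rpow_two]
    push_cast
    ring
  calc (#S : ℝ) = #(S.map toGaussian) := by rw [card_map]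
    _ ≤ C * (gaussianNorm r : ℝ) ^ (ε / 2) := card_le _ (mod_cast hr.ne') _ dvd
    _ = C * (r : ℝ) ^ ε := by
        rw [norm_r, ← Real.rpow_mul (mod_cast hr.le), mul_div_cancel₀ _ two_ne_zero]

lemma nsq_nonneg (a : ℤ × ℤ) : 0 ≤ nsq a := by
  unfold nsq
  positivity

lemma nsq_pos {a : ℤ × ℤ} (ha : a ≠ 0) : 0 < nsq a := by
  obtain h | h : a.1 ≠ 0 ∨ a.2 ≠ 0 := by
    by_contra! h
    exact ha (Prod.ext h.1 h.2)
  all_goals unfold nsq; positivity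

lemma pos_of_nsq_eq_of_ne {r : ℤ} {x y : ℤ × ℤ} (hx : nsq x = r) (hy : nsq y = r)
    (hxy : x ≠ y) : 0 < r := by
  obtain rfl | hx0 := eq_or_ne x 0
  · exact hy ▸ nsq_pos hxy.symm
  · exact hx ▸ nsq_pos hx0

/- The circumradius formula `R = |xy| |yz| |zx| / (4 Δ)`, squared: `R² = r` and the determinant
is `2 Δ`. -/
lemma nsq_sub_mul_nsq_sub_mul_nsq_sub_eq {r : ℤ} {x y z : ℤ × ℤ} (hx : nsq x = r) (hy : nsq y = r)
    (hz : nsq z = r) :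
    nsq (x - y) * nsq (x - z) * nsq (y - z) =
      4 * r * ((y.1 - x.1) * (z.2 - x.2) - (y.2 - x.2) * (z.1 - x.1)) ^ 2 := by
  obtain ⟨u, rfl⟩ : ∃ u, y = x + u := ⟨y - x, by abel⟩
  obtain ⟨v, rfl⟩ : ∃ v, z = x + v := ⟨z - x, by abel⟩
  simp only [nsq, Prod.fst_sub, Prod.snd_sub, Prod.fst_add, Prod.snd_add] at *
  have inner_u : u.1 ^ 2 + u.2 ^ 2 = -2 * (x.1 * u.1 + x.2 * u.2) := by linarith
  have inner_v : v.1 ^ 2 + v.2 ^ 2 = -2 * (x.1 * v.1 + x.2 * v.2) := by linarith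
  calc _ = ((u.1 ^ 2 + u.2 ^ 2) * v.1 - (v.1 ^ 2 + v.2 ^ 2) * u.1) ^ 2 +
        ((u.1 ^ 2 + u.2 ^ 2) * v.2 - (v.1 ^ 2 + v.2 ^ 2) * u.2) ^ 2 := by ring
    _ = 4 * (x.1 ^ 2 + x.2 ^ 2) * (u.1 * v.2 - u.2 * v.1) ^ 2 := by rw [inner_u, inner_v]; ring
    _ = _ := by rw [hx]; ring

lemma four_mul_le_nsq_sub_mul_nsq_sub_mul_nsq_sub {r : ℤ} {x y z : ℤ × ℤ} (hx : nsq x = r)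
    (hy : nsq y = r) (hz : nsq z = r) (hxy : x ≠ y) (hxz : x ≠ z) (hyz : y ≠ z) :
    4 * r ≤ nsq (x - y) * nsq (x - z) * nsq (y - z) := by
  have sides_pos : 0 < nsq (x - y) * nsq (x - z) * nsq (y - z) :=
    mul_pos (mul_pos (nsq_pos (sub_ne_zero.2 hxy)) (nsq_pos (sub_ne_zero.2 hxz)))
      (nsq_pos (sub_ne_zero.2 hyz))
  rw [nsq_sub_mul_nsq_sub_mul_nsq_sub_eq hx hy hz] at sides_pos ⊢
  have r_pos : 0 < 4 * r := mul_pos four_pos (pos_of_nsq_eq_of_ne hx hy hxy)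
  exact le_mul_of_one_le_right r_pos.le (pos_of_mul_pos_right sides_pos r_pos.le)

lemma le_pow_six_of_nsq_sub_le {r : ℤ} {L : ℝ} {x y z : ℤ × ℤ} (hx : nsq x = r) (hy : nsq y = r)
    (hz : nsq z = r) (hxy : x ≠ y) (hxz : x ≠ z) (hyz : y ≠ z) (hLxy : (nsq (x - y) : ℝ) ≤ L ^ 2)
    (hLxz : (nsq (x - z) : ℝ) ≤ L ^ 2) (hLyz : (nsq (y - z) : ℝ) ≤ L ^ 2) : (r : ℝ) ≤ L ^ 6 := by
  have r_pos : (0 : ℝ) < r := mod_cast pos_of_nsq_eq_of_ne hx hy hxy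
  have nsq_cast_nonneg (a : ℤ × ℤ) : (0 : ℝ) ≤ nsq a := mod_cast nsq_nonneg a
  calc (r : ℝ) ≤ 4 * r := by linarith
    _ ≤ nsq (x - y) * nsq (x - z) * nsq (y - z) :=
        mod_cast four_mul_le_nsq_sub_mul_nsq_sub_mul_nsq_sub hx hy hz hxy hxz hyz
    _ ≤ L ^ 2 * L ^ 2 * L ^ 2 := by gcongr <;> exact nsq_cast_nonneg _
    _ = L ^ 6 := by ring

theorem exists_card_nsq_eq_le_of_nsq_sub_le {ε : ℝ} (hε : 0 < ε) :
    ∃ C : ℝ, 0 < C ∧ ∀ (r : ℤ) (L : ℝ), 1 ≤ L → ∀ S : Finset (ℤ × ℤ), (∀ a ∈ S, nsq a = r) →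
      (∀ a ∈ S, ∀ b ∈ S, (nsq (a - b) : ℝ) ≤ L ^ 2) → (#S : ℝ) ≤ C * L ^ ε := by
  obtain ⟨C, hC, card_le⟩ := exists_card_nsq_eq_le (show 0 < ε / 6 by positivity)
  refine ⟨max C 2, by positivity, fun r L hL S hS hdist => ?_⟩
  obtain card_le_two | two_lt_card := le_or_gt #S 2
  · calc (#S : ℝ) ≤ 2 := mod_cast card_le_two
      _ ≤ max C 2 * 1 := by rw [mul_one]; exact le_max_right _ _
      _ ≤ max C 2 * L ^ ε := by gcongr; exact Real.one_le_rpow hL hε.le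
  obtain ⟨a, ha, b, hb, c, hc, hab, hac, hbc⟩ := Finset.two_lt_card.1 two_lt_card
  have r_pos : 0 < r := pos_of_nsq_eq_of_ne (hS a ha) (hS b hb) hab
  have r_le : (r : ℝ) ≤ L ^ 6 := le_pow_six_of_nsq_sub_le (hS a ha) (hS b hb) (hS c hc) hab hac hbc
    (hdist a ha b hb) (hdist a ha c hc) (hdist b hb c hc)
  calc (#S : ℝ) ≤ C * (r : ℝ) ^ (ε / 6) := card_le r r_pos S hS
    _ ≤ max C 2 * (L ^ 6) ^ (ε / 6) := by
        gcongr
        exact le_max_left _ _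
    _ = max C 2 * L ^ ε := by
        rw [← Real.rpow_natCast, ← Real.rpow_mul (by positivity), Nat.cast_ofNat,
          mul_div_cancel₀ _ (by norm_num)]

lemma nsq_sub_eq_two_mul_sub_nsq_add (a b : ℤ × ℤ) :
    nsq (a - b) = 2 * (nsq a + nsq b) - nsq (a + b) := by
  simp only [nsq, Prod.fst_sub, Prod.snd_sub, Prod.fst_add, Prod.snd_add]
  ring

lemma nsq_sub_le_two_mul_sq {a b : ℤ × ℤ} {M : ℝ} (ha : (nsq a : ℝ) ≤ M ^ 2)
    (hb : (nsq b : ℝ) ≤ M ^ 2) : (nsq (a - b) : ℝ) ≤ (2 * M) ^ 2 := by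
  have nsq_add_nonneg : (0 : ℝ) ≤ nsq (a + b) := mod_cast nsq_nonneg _
  rw [nsq_sub_eq_two_mul_sub_nsq_add]
  push_cast
  linarith

lemma nsq_sub_sub_sub_of_add_eq {a b a' b' : ℤ × ℤ} (h : a + b = a' + b') :
    nsq (a - b - (a' - b')) = 4 * nsq (a - a') := by
  obtain rfl : b = a' + b' - a := by rw [← h]; abel
  simp only [nsq, Prod.fst_sub, Prod.snd_sub, Prod.fst_add, Prod.snd_add]
  ring

lemma nsq_sub_eq_nsq_sub_of_add_eq {a b a' b' : ℤ × ℤ} (h : a + b = a' + b') :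
    nsq (a - a') = nsq (b - b') := by
  obtain rfl : b = a' + b' - a := by rw [← h]; abel
  simp only [nsq, Prod.fst_sub, Prod.snd_sub, Prod.fst_add, Prod.snd_add]
  ring

theorem exists_card_add_eq_nsq_add_nsq_eq_le {ε : ℝ} (hε : 0 < ε) :
    ∃ C : ℝ, 0 < C ∧ ∀ M₁ M₂ : ℝ, 1 ≤ M₁ → 1 ≤ M₂ → ∀ (s : ℤ × ℤ) (K : ℤ)
      (S : Finset ((ℤ × ℤ) × (ℤ × ℤ))),
      (∀ q ∈ S, (nsq q.1 : ℝ) ≤ M₁ ^ 2 ∧ (nsq q.2 : ℝ) ≤ M₂ ^ 2 ∧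
        q.1 + q.2 = s ∧ nsq q.1 + nsq q.2 = K) →
      (#S : ℝ) ≤ C * min M₁ M₂ ^ ε := by
  obtain ⟨C, hC, card_le⟩ := exists_card_nsq_eq_le_of_nsq_sub_le hε
  refine ⟨C * 4 ^ ε, by positivity, fun M₁ M₂ hM₁ hM₂ s K S hS => ?_⟩
  have one_le_min : 1 ≤ min M₁ M₂ := le_min hM₁ hM₂
  let diff : (ℤ × ℤ) × (ℤ × ℤ) → ℤ × ℤ := fun q => q.1 - q.2
  have add_eq (q) (hq : q ∈ S) (q') (hq' : q' ∈ S) : q.1 + q.2 = q'.1 + q'.2 :=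
    (hS q hq).2.2.1.trans (hS q' hq').2.2.1.symm
  have diff_injOn : Set.InjOn diff S := by
    intro q hq q' hq' h
    have hadd := add_eq q hq q' hq'
    simp only [diff, Prod.ext_iff, Prod.fst_add, Prod.snd_add, Prod.fst_sub,
      Prod.snd_sub] at h hadd ⊢
    omega
  have on_circle : ∀ a ∈ S.image diff, nsq a = 2 * K - nsq s := by
    rw [forall_mem_image]
    intro q hq
    obtain ⟨-, -, rfl, rfl⟩ := hS q hq
    exact nsq_sub_eq_two_mul_sub_nsq_add _ _
  have close : ∀ a ∈ S.image diff, ∀ b ∈ S.image diff,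
      (nsq (a - b) : ℝ) ≤ (4 * min M₁ M₂) ^ 2 := by
    simp only [forall_mem_image]
    intro q hq q' hq'
    have hadd := add_eq q hq q' hq'
    have nsq_fst_sub_le : (nsq (q.1 - q'.1) : ℝ) ≤ (2 * min M₁ M₂) ^ 2 := by
      obtain h | h := min_choice M₁ M₂ <;> rw [h]
      · exact nsq_sub_le_two_mul_sq (hS q hq).1 (hS q' hq').1
      · exact nsq_sub_eq_nsq_sub_of_add_eq hadd ▸
          nsq_sub_le_two_mul_sq (hS q hq).2.1 (hS q' hq').2.1
    rw [nsq_sub_sub_sub_of_add_eq hadd]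
    push_cast
    linarith
  calc (#S : ℝ) = #(S.image diff) := by rw [card_image_of_injOn diff_injOn]
    _ ≤ C * (4 * min M₁ M₂) ^ ε := card_le _ _ (by linarith) _ on_circle close
    _ = C * 4 ^ ε * min M₁ M₂ ^ ε := by
        rw [Real.mul_rpow (by norm_num) (by positivity), mul_assoc]

/-! ### Schur's test -/

lemma summable_abs_mul_sq {κ : Type*} {h f : κ → ℝ} {A : ℝ} (hA : ∀ q, |h q| ≤ A)
    (hf : Summable fun q => f q ^ 2) : Summable fun q => |h q| * f q ^ 2 :=
  (hf.mul_left A).of_nonneg_of_le (fun _ => by positivity) fun q => by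
    gcongr
    exact hA q

lemma sq_tsum_mul_le {κ : Type*} {h f : κ → ℝ} {A : ℝ} (hA : ∀ T : Finset κ, ∑ q ∈ T, |h q| ≤ A)
    (hf : Summable fun q => |h q| * f q ^ 2) :
    (∑' q, h q * f q) ^ 2 ≤ A * ∑' q, |h q| * f q ^ 2 := by
  have summable_abs : Summable fun q => |h q| := summable_of_sum_le (fun _ => abs_nonneg _) hA
  have summable_mul : Summable fun q => h q * f q := by
    refine (summable_abs.add hf).of_norm_bounded fun q => ?_
    have abs_le : |f q| ≤ 1 + f q ^ 2 := by nlinarith [sq_abs (f q), sq_nonneg (|f q| - 1)]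
    calc ‖h q * f q‖ = |h q| * |f q| := abs_mul _ _
      _ ≤ |h q| * (1 + f q ^ 2) := by gcongr
      _ = |h q| + |h q| * f q ^ 2 := by ring
  have A_nonneg : 0 ≤ A := by simpa using hA ∅
  refine le_of_tendsto' (summable_mul.hasSum.pow 2) fun T => ?_
  calc (∑ q ∈ T, h q * f q) ^ 2
      ≤ (∑ q ∈ T, |h q|) * ∑ q ∈ T, |h q| * f q ^ 2 :=
        sum_sq_le_sum_mul_sum_of_sq_le_mul T (fun _ _ => by positivity) (fun _ _ => by positivity)
          fun q _ => by rw [mul_pow, ← mul_assoc, ← sq, sq_abs]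
    _ ≤ A * ∑' q, |h q| * f q ^ 2 := by
        gcongr
        · exact hA T
        · exact hf.sum_le_tsum T fun _ _ => by positivity

theorem tsum_sq_tsum_mul_le {ι κ : Type*} {h : ι → κ → ℝ} {A B : ℝ} (hA : 0 ≤ A)
    (hrow : ∀ p (T : Finset κ), ∑ q ∈ T, |h p q| ≤ A)
    (hcol : ∀ q (S : Finset ι), ∑ p ∈ S, |h p q| ≤ B)
    {f : κ → ℝ} (hf : Summable fun q => f q ^ 2) :
    ∑' p, (∑' q, h p q * f q) ^ 2 ≤ A * B * ∑' q, f q ^ 2 := by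
  have summable_row (p : ι) : Summable fun q => |h p q| * f q ^ 2 :=
    summable_abs_mul_sq (fun q => by simpa using hrow p {q}) hf
  refine Real.tsum_le_of_sum_le (fun _ => sq_nonneg _) fun S => ?_
  have col_le (q : κ) : ∑ p ∈ S, |h p q| * f q ^ 2 ≤ B * f q ^ 2 := by
    rw [← sum_mul]
    gcongr
    exact hcol q S
  calc ∑ p ∈ S, (∑' q, h p q * f q) ^ 2
      ≤ ∑ p ∈ S, A * ∑' q, |h p q| * f q ^ 2 :=
        sum_le_sum fun p _ => sq_tsum_mul_le (hrow p) (summable_row p)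
    _ = A * ∑' q, ∑ p ∈ S, |h p q| * f q ^ 2 := by
        rw [← mul_sum, Summable.tsum_finsetSum fun p _ => summable_row p]
    _ ≤ A * ∑' q, B * f q ^ 2 := by
        gcongr with q
        exacts [summable_sum fun p _ => summable_row p, hf.mul_left B, col_le q]
    _ = A * B * ∑' q, f q ^ 2 := by rw [tsum_mul_left, mul_assoc]

/-! ### The base tensor -/

lemma nsq_le_sq_of_simDyadic {N : ℝ} {n : ℤ × ℤ} (h : simDyadic N n) : (nsq n : ℝ) ≤ N ^ 2 := by
  have znorm_le : znorm n ≤ N := by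
    obtain ⟨rfl, h⟩ | ⟨-, -, h⟩ := h <;> exact h
  have := Real.sqrt_le_iff.1 znorm_le
  simpa [nsq] using this.2

lemma SMem.swap {N N₁ N₂ N₃ : ℝ} {m : ℤ} {n n₁ n₂ n₃ : ℤ × ℤ}
    (h : SMem N N₁ N₂ N₃ m n n₁ n₂ n₃) : SMem N₁ N N₃ N₂ (-m) n₁ n n₃ n₂ := by
  obtain ⟨rfl, hn₁, hn₃, rfl, hN, hN₁, hN₂, hN₃⟩ := h
  refine ⟨by abel, hn₁.symm, fun h => hn₃ (by rw [h]; abel), ?_, hN₁, hN, hN₃, hN₂⟩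
  unfold phiFn
  ring

lemma hten_swap (N N₁ N₂ N₃ : ℝ) (m : ℤ) (n n₁ n₂ n₃ : ℤ × ℤ) :
    hten N N₁ N₂ N₃ m n n₁ n₂ n₃ = hten N₁ N N₃ N₂ (-m) n₁ n n₃ n₂ := by
  have smem_iff : SMem N N₁ N₂ N₃ m n n₁ n₂ n₃ ↔ SMem N₁ N N₃ N₂ (-m) n₁ n n₃ n₂ :=
    ⟨SMem.swap, fun h => neg_neg m ▸ h.swap⟩
  classical exact if_congr smem_iff rfl rfl

theorem exists_sum_abs_hten_le {ε : ℝ} (hε : 0 < ε) :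
    ∃ C : ℝ, 0 < C ∧ ∀ N N₁ N₂ N₃ : ℝ, 1 ≤ N₁ → 1 ≤ N₃ → ∀ (m : ℤ) (p : (ℤ × ℤ) × (ℤ × ℤ))
      (T : Finset ((ℤ × ℤ) × (ℤ × ℤ))),
      ∑ q ∈ T, |hten N N₁ N₂ N₃ m p.1 q.1 p.2 q.2| ≤ C * min N₁ N₃ ^ ε := by
  classical
  obtain ⟨C, hC, card_le⟩ := exists_card_add_eq_nsq_add_nsq_eq_le hε
  refine ⟨C, hC, fun N N₁ N₂ N₃ hN₁ hN₃ m p T => ?_⟩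
  calc ∑ q ∈ T, |hten N N₁ N₂ N₃ m p.1 q.1 p.2 q.2|
      = #{q ∈ T | SMem N N₁ N₂ N₃ m p.1 q.1 p.2 q.2} := by
        simp only [hten, apply_ite abs, abs_one, abs_zero, sum_boole]
    _ ≤ C * min N₁ N₃ ^ ε := by
        refine card_le N₁ N₃ hN₁ hN₃ (p.1 + p.2) (nsq p.1 + nsq p.2 - m) _ fun q hq => ?_
        obtain ⟨hn, -, -, rfl, -, hq₁, -, hq₃⟩ := (mem_filter.1 hq).2
        refine ⟨nsq_le_sq_of_simDyadic hq₁, nsq_le_sq_of_simDyadic hq₃, ?_, ?_⟩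
        · rw [hn]; abel
        · rw [phiFn]; ring

lemma IsDyadic.one_le {N : ℝ} (hN : IsDyadic N) : 1 ≤ N := by
  obtain ⟨k, rfl⟩ := hN
  exact one_le_pow₀ one_le_two

theorem stmt16_general (ε : ℝ) (hε : 0 < ε) :
    ∃ C : ℝ, 0 < C ∧ ∀ N N₁ N₂ N₃ : ℝ, 1 ≤ N → 1 ≤ N₁ → 1 ≤ N₂ → 1 ≤ N₃ → ∀ m : ℤ,
      ∀ f : (ℤ × ℤ) × (ℤ × ℤ) → ℝ, Summable (fun q => f q ^ 2) →
        Real.sqrt (∑' p : (ℤ × ℤ) × (ℤ × ℤ),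
            (∑' q : (ℤ × ℤ) × (ℤ × ℤ), hten N N₁ N₂ N₃ m p.1 q.1 p.2 q.2 * f q) ^ 2) ≤
          C * (min N N₂) ^ ε * (min N₁ N₃) ^ ε *
            Real.sqrt (∑' q : (ℤ × ℤ) × (ℤ × ℤ), f q ^ 2) := by
  obtain ⟨C, hC, row_sum_le⟩ := exists_sum_abs_hten_le (show 0 < 2 * ε by positivity)
  refine ⟨C, hC, fun N N₁ N₂ N₃ hN hN₁ hN₂ hN₃ m f hf => ?_⟩
  have hrow := row_sum_le N N₁ N₂ N₃ hN₁ hN₃ m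
  have hcol : ∀ (q : (ℤ × ℤ) × (ℤ × ℤ)) (S : Finset ((ℤ × ℤ) × (ℤ × ℤ))),
      ∑ p ∈ S, |hten N N₁ N₂ N₃ m p.1 q.1 p.2 q.2| ≤ C * min N N₂ ^ (2 * ε) := by
    simpa only [← hten_swap] using row_sum_le N₁ N N₃ N₂ hN hN₂ (-m)
  have rpow_two_mul {x : ℝ} (hx : 0 ≤ x) : x ^ (2 * ε) = (x ^ ε) ^ 2 := by
    rw [mul_comm, Real.rpow_mul hx, Real.rpow_two]
  calc Real.sqrt (∑' p : (ℤ × ℤ) × (ℤ × ℤ),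
            (∑' q : (ℤ × ℤ) × (ℤ × ℤ), hten N N₁ N₂ N₃ m p.1 q.1 p.2 q.2 * f q) ^ 2)
      ≤ Real.sqrt (C * min N₁ N₃ ^ (2 * ε) * (C * min N N₂ ^ (2 * ε)) * ∑' q, f q ^ 2) :=
        Real.sqrt_le_sqrt (tsum_sq_tsum_mul_le (by positivity) hrow hcol hf)
    _ = Real.sqrt ((C * min N N₂ ^ ε * min N₁ N₃ ^ ε) ^ 2 * ∑' q, f q ^ 2) := by
        rw [rpow_two_mul (by positivity), rpow_two_mul (by positivity)]
        ring_nf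
    _ = _ := by rw [Real.sqrt_mul (by positivity), Real.sqrt_sq (by positivity)]

theorem stmt16 (ε : ℝ) (hε : 0 < ε) :
    ∃ C : ℝ, 0 < C ∧ ∀ N N₁ N₂ N₃ : ℝ,
      IsDyadic N → IsDyadic N₁ → IsDyadic N₂ → IsDyadic N₃ → ∀ m : ℤ,
      ∀ f : (ℤ × ℤ) × (ℤ × ℤ) → ℝ, Summable (fun q => f q ^ 2) →
        Real.sqrt (∑' p : (ℤ × ℤ) × (ℤ × ℤ),
            (∑' q : (ℤ × ℤ) × (ℤ × ℤ), hten N N₁ N₂ N₃ m p.1 q.1 p.2 q.2 * f q) ^ 2) ≤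
          C * (min N N₂) ^ ε * (min N₁ N₃) ^ ε *
            Real.sqrt (∑' q : (ℤ × ℤ) × (ℤ × ℤ), f q ^ 2) := by
  obtain ⟨C, hC, bound⟩ := stmt16_general ε hε
  exact ⟨C, hC, fun N N₁ N₂ N₃ hN hN₁ hN₂ hN₃ =>
    bound N N₁ N₂ N₃ hN.one_le hN₁.one_le hN₂.one_le hN₃.one_le⟩
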